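/- Let H and K be complex Hilbert spaces, let V : H → K be an isometry, let π : B(H) → B(K) be a unital *-homomorphism, set P = VV* and define φ(X) = V*π(X)V for X ∈ B(H). Then for every X ∈ B(H), ‖Pπ(X) − π(X)P‖ = max( ‖φ(X*X) − φ(X)*φ(X)‖^{1/2}, ‖φ(XX*) − φ(X)φ(X*)‖^{1/2} ). -/

import Mathlib

open ContinuousLinearMap

noncomputable section

/-! With respect to the range of `P` and its complement, `PT - TP` is off-diagonal, with corners
`PT(1 - P)` and `-(1 - P)TP`. These corners have orthogonal ranges and orthogonal supports, so the
norm of the commutator is the larger of theirs. Since `‖(1 - P)TP‖ = ‖(1 - P)TV‖` and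
`V†T†(1 - P)TV = V†T†TV - (V†TV)†(V†TV)`, the C⋆-identity expresses `‖(1 - P)TP‖` through the
multiplicativity defect of the compression `T ↦ V†TV` at `T`, and `PT(1 - P)` is the adjoint of the
same corner for `T†`. -/

open Filter in
theorem le_of_frequently_pow_le_mul_pow {x y C : ℝ} (hy : 0 ≤ y)
    (h : ∃ᶠ n : ℕ in atTop, x ^ n ≤ C * y ^ n) : x ≤ y := by
  by_contra! hyx
  have hx : 0 < x := hy.trans_lt hyx
  have hlim : Tendsto (fun n : ℕ ↦ C * (y / x) ^ n) atTop (nhds 0) := by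
    simpa only [mul_zero] using
      (tendsto_pow_atTop_nhds_zero_of_lt_one (by positivity) ((div_lt_one hx).2 hyx)).const_mul C
  obtain ⟨n, hn, hlt⟩ := (h.and_eventually (hlim.eventually_lt_const one_pos)).exists
  rw [div_pow, ← mul_div_assoc, div_lt_one (by positivity)] at hlt
  exact hn.not_gt hlt

section CStarRing

variable {A : Type*} [NonUnitalNormedRing A] [StarRing A] [CStarRing A] {a b : A}

theorem norm_sq_add_of_star_mul_eq_zero (h : star a * b = 0) :
    ‖a + b‖ ^ 2 = ‖star a * a + star b * b‖ := by
  have h' : star b * a = 0 := by simpa using congr(star $h)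
  rw [sq, ← CStarRing.norm_star_mul_self]
  simp only [star_add, add_mul, mul_add, h, h', add_zero, zero_add]

/- Squaring replaces `a` and `b` by `star a * a` and `star b * b`, which are again orthogonal, so
the triangle inequality can be improved by iterating the C⋆-identity. -/
theorem norm_add_pow_two_pow_le_of_star_mul_eq_zero (h : star a * b = 0) (h' : a * star b = 0)
    (n : ℕ) : ‖a + b‖ ^ 2 ^ n ≤ ‖a‖ ^ 2 ^ n + ‖b‖ ^ 2 ^ n := by
  induction n generalizing a b with
  | zero => simpa only [pow_zero, pow_one] using norm_add_le a b
  | succ n ih =>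
    have horth : star a * a * (star b * b) = 0 := by
      rw [mul_assoc, ← mul_assoc a, h', zero_mul, mul_zero]
    have key := ih (a := star a * a) (b := star b * b) (by simpa using horth) (by simpa using horth)
    simpa only [← norm_sq_add_of_star_mul_eq_zero h, CStarRing.norm_star_mul_self, ← sq,
      ← pow_mul, ← pow_succ'] using key

theorem norm_le_norm_add_of_star_mul_eq_zero (h : star a * b = 0) : ‖a‖ ≤ ‖a + b‖ := by
  rcases (norm_nonneg a).eq_or_lt with ha | ha
  · exact ha ▸ norm_nonneg _
  refine le_of_mul_le_mul_left ?_ ha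
  calc ‖a‖ * ‖a‖ = ‖star a * (a + b)‖ := by rw [mul_add, h, add_zero, CStarRing.norm_star_mul_self]
    _ ≤ ‖a‖ * ‖a + b‖ := (norm_mul_le _ _).trans_eq (by rw [norm_star])

theorem norm_add_eq_max_of_star_mul_eq_zero (h : star a * b = 0) (h' : a * star b = 0) :
    ‖a + b‖ = max ‖a‖ ‖b‖ := by
  apply le_antisymm
  · have hpow (n : ℕ) : ‖a + b‖ ^ 2 ^ n ≤ 2 * max ‖a‖ ‖b‖ ^ 2 ^ n :=
      calc ‖a + b‖ ^ 2 ^ n ≤ ‖a‖ ^ 2 ^ n + ‖b‖ ^ 2 ^ n :=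
            norm_add_pow_two_pow_le_of_star_mul_eq_zero h h' n
        _ ≤ max ‖a‖ ‖b‖ ^ 2 ^ n + max ‖a‖ ‖b‖ ^ 2 ^ n := by
            gcongr
            exacts [le_max_left _ _, le_max_right _ _]
        _ = 2 * max ‖a‖ ‖b‖ ^ 2 ^ n := (two_mul _).symm
    exact le_of_frequently_pow_le_mul_pow (by positivity)
      ((tendsto_pow_atTop_atTop_of_one_lt one_lt_two).frequently (.of_forall hpow))
  · have h'' : star b * a = 0 := by simpa using congr(star $h)
    exact max_le (norm_le_norm_add_of_star_mul_eq_zero h)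
      (add_comm a b ▸ norm_le_norm_add_of_star_mul_eq_zero h'')

end CStarRing

theorem norm_commutator_eq_max_of_isStarProjection {A : Type*} [NormedRing A] [StarRing A]
    [CStarRing A] {p : A} (hp : IsStarProjection p) (a : A) :
    ‖p * a - a * p‖ = max ‖(1 - p) * a * p‖ ‖(1 - p) * star a * p‖ := by
  have hsplit : p * a - a * p = -((1 - p) * a * p) + p * a * (1 - p) := by noncomm_ring
  have hp_star : star p = p := hp.isSelfAdjoint
  have hq_star : star (1 - p) = 1 - p := hp.one_sub.isSelfAdjoint
  have hleft : star (-((1 - p) * a * p)) * (p * a * (1 - p)) = 0 :=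
    calc star (-((1 - p) * a * p)) * (p * a * (1 - p))
        = -(p * star a * ((1 - p) * p) * a * (1 - p)) := by
          simp only [star_neg, star_mul, hp_star, hq_star, neg_mul, mul_assoc]
      _ = 0 := by simp only [hp.one_sub_mul_self, mul_zero, zero_mul, neg_zero]
  have hright : -((1 - p) * a * p) * star (p * a * (1 - p)) = 0 :=
    calc -((1 - p) * a * p) * star (p * a * (1 - p))
        = -((1 - p) * a * (p * (1 - p)) * star a * p) := by
          simp only [star_mul, hp_star, hq_star, neg_mul, mul_assoc]
      _ = 0 := by simp only [hp.mul_one_sub_self, mul_zero, zero_mul, neg_zero]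
  have hcorner : ‖p * a * (1 - p)‖ = ‖(1 - p) * star a * p‖ := by
    rw [← norm_star]
    simp only [star_mul, hp_star, hq_star, mul_assoc]
  rw [hsplit, norm_add_eq_max_of_star_mul_eq_zero hleft hright, norm_neg, hcorner]

section Compression

variable {𝕜 H K : Type*} [RCLike 𝕜]
  [NormedAddCommGroup H] [InnerProductSpace 𝕜 H] [CompleteSpace H]
  [NormedAddCommGroup K] [InnerProductSpace 𝕜 K] [CompleteSpace K]

/-- The compression `V†TV` of an operator `T` on `K` along an arbitrary `V : H → K`; the map `φ` of
the theorem is `Y ↦ compression V (π Y)`. -/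
def compression (V : H →L[𝕜] K) (T : K →L[𝕜] K) : H →L[𝕜] H := adjoint V ∘L (T ∘L V)

variable {V : H →L[𝕜] K}

theorem star_compression (T : K →L[𝕜] K) :
    star (compression V T) = compression V (star T) := by
  simp only [compression, star_eq_adjoint, adjoint_comp, adjoint_adjoint, comp_assoc]

theorem isStarProjection_comp_adjoint_of_adjoint_comp_eq_id (hV : adjoint V ∘L V = .id 𝕜 H) :
    IsStarProjection (V ∘L adjoint V) where
  isIdempotentElem := by
    change (V ∘L adjoint V) ∘L (V ∘L adjoint V) = V ∘L adjoint V
    rw [comp_assoc, ← comp_assoc (adjoint V), hV, id_comp]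
  isSelfAdjoint := (isPositive_self_comp_adjoint V).isSelfAdjoint

theorem norm_comp_comp_adjoint_of_isIdempotentElem {G : Type*} [NormedAddCommGroup G]
    [InnerProductSpace 𝕜 G] [CompleteSpace G] (hV : IsIdempotentElem (V ∘L adjoint V))
    (T : K →L[𝕜] G) :
    ‖T ∘L (V ∘L adjoint V)‖ = ‖T ∘L V‖ := by
  set P := V ∘L adjoint V with hP
  have hP_adj : adjoint P = P := by rw [hP, adjoint_comp, adjoint_adjoint]
  have hsq : adjoint (adjoint (T ∘L P)) ∘L adjoint (T ∘L P) =
      adjoint (adjoint (T ∘L V)) ∘L adjoint (T ∘L V) :=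
    calc adjoint (adjoint (T ∘L P)) ∘L adjoint (T ∘L P)
        = T ∘L (P * P) ∘L adjoint T := by
          rw [adjoint_adjoint, adjoint_comp, hP_adj]; rfl
      _ = adjoint (adjoint (T ∘L V)) ∘L adjoint (T ∘L V) := by
          rw [hV.eq, adjoint_adjoint, adjoint_comp]; rfl
  have hnorm := congr(‖$hsq‖)
  simp only [norm_adjoint_comp_self, LinearIsometryEquiv.norm_map] at hnorm
  exact (mul_self_inj (norm_nonneg _) (norm_nonneg _)).1 hnorm

theorem norm_compression_star_mul_self_sub (hV : IsStarProjection (V ∘L adjoint V))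
    (T : K →L[𝕜] K) :
    ‖compression V (star T * T) - star (compression V T) * compression V T‖ =
      ‖(1 - V ∘L adjoint V) * T * (V ∘L adjoint V)‖ ^ 2 := by
  set Q := 1 - V ∘L adjoint V with hQ
  have hQ_adj : adjoint Q = Q := hV.one_sub.isSelfAdjoint
  have hQ_idem : Q ∘L Q = Q := hV.one_sub.isIdempotentElem
  have hdefect : compression V (star T * T) - star (compression V T) * compression V T =
      adjoint ((Q * T) ∘L V) ∘L ((Q * T) ∘L V) :=
    calc compression V (star T * T) - star (compression V T) * compression V T
        = adjoint V ∘L (star T ∘L Q ∘L T) ∘L V := by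
          rw [star_compression]
          ext x
          simp [compression, hQ]
      _ = adjoint V ∘L (star T ∘L (Q ∘L Q) ∘L T) ∘L V := by rw [hQ_idem]
      _ = adjoint ((Q * T) ∘L V) ∘L ((Q * T) ∘L V) := by
          rw [mul_def, adjoint_comp, adjoint_comp, hQ_adj]; rfl
  have hcorner : ‖Q * T * (V ∘L adjoint V)‖ = ‖(Q * T) ∘L V‖ :=
    norm_comp_comp_adjoint_of_isIdempotentElem hV.isIdempotentElem (Q * T)
  rw [hdefect, norm_adjoint_comp_self, hcorner, sq]

end Compression

/-- The hypothesis `hP_proj` says that `V` is a partial isometry. -/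
theorem stmt4_general {𝕜 H K A F : Type*} [RCLike 𝕜]
    [NormedAddCommGroup H] [InnerProductSpace 𝕜 H] [CompleteSpace H]
    [NormedAddCommGroup K] [InnerProductSpace 𝕜 K] [CompleteSpace K]
    [Mul A] [Star A] [FunLike F A (K →L[𝕜] K)] [MulHomClass F A (K →L[𝕜] K)]
    [StarHomClass F A (K →L[𝕜] K)]
    (V : H →L[𝕜] K) (π : F) (X : A)
    (P : K →L[𝕜] K) (hP : P = V ∘L adjoint V) (hP_proj : IsStarProjection P)
    (φ : A → (H →L[𝕜] H)) (hφ : ∀ Y, φ Y = adjoint V ∘L (π Y ∘L V)) :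
    ‖P * π X - π X * P‖ =
      max (Real.sqrt ‖φ (star X * X) - star (φ X) * φ X‖)
        (Real.sqrt ‖φ (X * star X) - φ X * φ (star X)‖) := by
  subst hP
  have hφ_eq (Y : A) : φ Y = compression V (π Y) := hφ Y
  have hleft := norm_compression_star_mul_self_sub hP_proj (π X)
  have hright := norm_compression_star_mul_self_sub hP_proj (star (π X))
  rw [star_star, star_compression, star_star] at hright
  simp only [hφ_eq, map_mul, map_star]
  rw [norm_commutator_eq_max_of_isStarProjection hP_proj, hleft, hright,
    Real.sqrt_sq (norm_nonneg _), Real.sqrt_sq (norm_nonneg _)]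

/-- let `V : H → K` be an isometry, `π : B(H) → B(K)` a unital
`*`-homomorphism, `P = VV*` and `φ(X) = V*π(X)V`.  Then for every `X ∈ B(H)`,
`‖Pπ(X) - π(X)P‖ = max(‖φ(X*X) - φ(X)*φ(X)‖^{1/2}, ‖φ(XX*) - φ(X)φ(X*)‖^{1/2})`. -/
theorem stmt4 {H K : Type*} [NormedAddCommGroup H] [InnerProductSpace ℂ H] [CompleteSpace H]
    [NormedAddCommGroup K] [InnerProductSpace ℂ K] [CompleteSpace K]
    (V : H →L[ℂ] K) (hV : (adjoint V) ∘L V = ContinuousLinearMap.id ℂ H)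
    (π : (H →L[ℂ] H) →⋆ₐ[ℂ] (K →L[ℂ] K)) (X : H →L[ℂ] H)
    (P : K →L[ℂ] K) (hP : P = V ∘L adjoint V)
    (φ : (H →L[ℂ] H) → (H →L[ℂ] H)) (hφ : ∀ Y, φ Y = adjoint V ∘L (π Y ∘L V)) :
    ‖P * π X - π X * P‖ =
      max (Real.sqrt ‖φ (star X * X) - star (φ X) * φ X‖)
        (Real.sqrt ‖φ (X * star X) - φ X * φ (star X)‖) := by
  exact stmt4_general V π X P hP
    (hP ▸ isStarProjection_comp_adjoint_of_adjoint_comp_eq_id hV) φ hφ
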